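/- Let G be a group, V a finite-dimensional complex vector space, and ρ : G → GL(V) a representation such that End V decomposes as a direct sum of pairwise non-isomorphic irreducible G-subrepresentations (under the conjugation action h · T = ρ(h) T ρ(h)^{-1}, equivalently the action on V^* ⊗ V). Let v ∈ V, v^* ∈ V^*, and T ∈ End V. Suppose there is an irreducible summand W of End V such that T has nonzero component in W and v^* ⊗ v (viewed in End V via the dual pairing) has nonzero component in the summand dual to W under the trace pairing. Then there exists h ∈ G with (ρ(h)·v^*)(T (ρ(h) v)) ≠ 0, where ρ(h)·v^* denotes the contragredient action. -/

import Mathlib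

/-!
In a multiplicity-free semisimple module each simple summand has only one complement, the sum of
the other summands. Hence a submodule not containing the summand lies in that complement, and a
vector with a nonzero component in a summand generates a submodule containing it.

So if `x` and `y` have nonzero components in summands paired nontrivially by an invariant pairing
`B`, then the orbits of `x` and `y` span submodules containing these summands, and
`B (a • x) (b • y) ≠ 0` for some `a` and `b`. By invariance `B x ((a⁻¹ * b) • y) ≠ 0`. The theorem
is the case of the trace pairing `(T, A) ↦ tr (T * A)` on `End V` with `x = T` and `y = v* ⊗ v`.
-/

section Module

variable {R M ι : Type*} [Ring R] [AddCommGroup M] [Module R M] {W : ι → Submodule R M}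

theorem le_of_isCompl_of_forall_map_ne {S N C : Submodule R M} [IsSimpleModule R S]
    (hne : ∀ f : Module.End R M, N.map f ≠ S) (hC : IsCompl S C) : N ≤ C := by
  have hle : N.map (S.projection C hC) ≤ S := by
    rintro _ ⟨x, -, rfl⟩
    exact S.projection_apply_mem hC x
  have hbot : N.map (S.projection C hC) = ⊥ :=
    ((isSimpleModule_iff_isAtom.mp ‹_›).le_iff.mp hle).resolve_right (hne _)
  rwa [← LinearMap.le_ker_iff_map, Submodule.ker_projection] at hbot

theorem eq_iSup_ne_of_isCompl {i : ι} [IsSimpleModule R (W i)]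
    (hsup : ⨆ j, W j = ⊤) (hne : ∀ j ≠ i, ∀ f : Module.End R M, (W j).map f ≠ W i)
    {C : Submodule R M} (hC : IsCompl (W i) C) : C = ⨆ j ≠ i, W j := by
  have hle : ⨆ j ≠ i, W j ≤ C :=
    iSup₂_le fun j hji ↦ le_of_isCompl_of_forall_map_ne (hne j hji) hC
  have hcodisj : (⨆ j ≠ i, W j) ⊔ W i = ⊤ := by
    rw [sup_comm, ← iSup_split_single, hsup]
  refine (eq_of_le_of_inf_le_of_sup_le (z := W i) hle ?_ ?_).symm
  · exact hC.symm.inf_eq_bot.trans_le bot_le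
  · exact le_top.trans_eq hcodisj.symm

theorem le_of_mem_of_notMem_iSup_ne [∀ i, IsSimpleModule R (W i)] {i : ι}
    (hsup : ⨆ j, W j = ⊤) (hne : ∀ j ≠ i, ∀ f : Module.End R M, (W j).map f ≠ W i)
    {N : Submodule R M} {x : M} (hxN : x ∈ N) (hx : x ∉ ⨆ j ≠ i, W j) : W i ≤ N := by
  have : IsSemisimpleModule R M :=
    isSemisimpleModule_of_isSemisimpleModule_submodule' (fun _ ↦ inferInstance) hsup
  by_contra hWN
  have hdisj : Disjoint N (W i) :=
    ((isSimpleModule_iff_isAtom.mp inferInstance).not_le_iff_disjoint.mp hWN).symm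
  obtain ⟨C, hNC, hC⟩ := hdisj.exists_isCompl
  exact hx (eq_iSup_ne_of_isCompl hsup hne hC.symm ▸ hNC hxN)

end Module

section Representation

variable {K G E F P ι κ : Type*} [CommRing K] [AddCommGroup E] [Module K E]
  [AddCommGroup F] [Module K F] [AddCommGroup P] [Module K P]

/-- The subrepresentations `W i` decompose `σ` into pairwise non-isomorphic irreducible summands.
Non-isomorphism is expressed inside `σ`: no intertwining endomorphism carries `W i` onto `W j`,
which suffices since homomorphisms between summands extend to `σ` by zero. -/
structure IsMultiplicityFreeDecomposition [Monoid G] {σ : Representation K G E}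
    (W : ι → Subrepresentation σ) : Prop where
  iSup_eq_top : ⨆ i, (W i).toSubmodule = ⊤
  isAtom : ∀ i, IsAtom (W i)
  map_ne : ∀ i j, i ≠ j → ∀ f : σ.IntertwiningMap σ,
    (W i).toSubmodule.map f.toLinearMap ≠ (W j).toSubmodule

namespace IsMultiplicityFreeDecomposition

open scoped MonoidAlgebra

theorem of_submodule [Monoid G] {σ : Representation K G E} {W : ι → Submodule K E}
    (hsup : ⨆ i, W i = ⊤) (hinv : ∀ i g, ∀ x ∈ W i, σ g x ∈ W i)
    (hirr : ∀ i, W i ≠ ⊥ ∧ ∀ U ≤ W i, (∀ g, ∀ x ∈ U, σ g x ∈ U) → U = ⊥ ∨ U = W i)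
    (hnoniso : ∀ i j, i ≠ j → ¬ ∃ f : E →ₗ[K] E, (∀ g x, f (σ g x) = σ g (f x)) ∧
      (W i).map f = W j ∧ ∀ x ∈ W i, f x = 0 → x = 0) :
    IsMultiplicityFreeDecomposition fun i ↦ (⟨W i, hinv i⟩ : Subrepresentation σ) where
  iSup_eq_top := hsup
  isAtom i := by
    refine ⟨fun h ↦ (hirr i).1 congr(($h).toSubmodule), fun U hU ↦ ?_⟩
    refine Subrepresentation.toSubmodule_injective ?_
    refine ((hirr i).2 U.toSubmodule hU.le U.apply_mem_toSubmodule).resolve_right fun h ↦ hU.ne ?_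
    exact Subrepresentation.toSubmodule_injective h
  map_ne i j hij f hf := by
    have hcomm : ∀ g x, f.toLinearMap (σ g x) = σ g (f.toLinearMap x) :=
      fun g x ↦ LinearMap.congr_fun (f.isIntertwining' g) x
    refine hnoniso i j hij ⟨f.toLinearMap, hcomm, hf, ?_⟩
    have hker : W i ⊓ LinearMap.ker f.toLinearMap = ⊥ := by
      refine ((hirr i).2 _ inf_le_left ?_).resolve_right fun h ↦ (hirr j).1 ?_
      · rintro g x ⟨hxW, hxf⟩
        refine ⟨hinv i g x hxW, ?_⟩
        rw [SetLike.mem_coe, LinearMap.mem_ker] at hxf ⊢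
        rw [hcomm, hxf, map_zero]
      · exact hf.symm.trans (LinearMap.le_ker_iff_map.mp (inf_eq_left.mp h))
    exact fun x hxW hxf ↦ (Submodule.mem_bot K).mp (hker ▸ ⟨hxW, hxf⟩)

section Monoid

variable [Monoid G] {σ : Representation K G E} {W : ι → Subrepresentation σ}

theorem le_of_mem_of_notMem_iSup_ne (hW : IsMultiplicityFreeDecomposition W)
    {U : Subrepresentation σ} {x : E} (hxU : x ∈ U) {i : ι}
    (hx : x ∉ ⨆ j ≠ i, (W j).toSubmodule) : W i ≤ U := by
  have hsimple (i) : IsSimpleModule K[G] (W i).asSubmodule :=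
    isSimpleModule_iff_isAtom.mpr <|
      (Subrepresentation.subrepresentationSubmoduleOrderIso.isAtom_iff _).mpr (hW.isAtom i)
  have hsup : ⨆ i, (W i).asSubmodule = ⊤ := by
    apply Submodule.restrictScalars_injective K
    rw [Submodule.restrictScalars_iSup]
    exact hW.iSup_eq_top
  have hne (j) (hji : j ≠ i) (f : Module.End K[G] σ.asModule) :
      (W j).asSubmodule.map f ≠ (W i).asSubmodule := fun hf ↦ by
    refine hW.map_ne j i hji ((Representation.IntertwiningMap.equivLinearMapAsModule σ σ).symm f) ?_
    ext x
    exact SetLike.ext_iff.mp hf x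
  have hcompl : (⨆ j ≠ i, (W j).asSubmodule).restrictScalars K = ⨆ j ≠ i, (W j).toSubmodule := by
    simp only [Submodule.restrictScalars_iSup]
    rfl
  exact _root_.le_of_mem_of_notMem_iSup_ne hsup hne (N := U.asSubmodule) hxU fun hx' ↦
    hx (hcompl.le hx')

theorem le_span_orbit (hW : IsMultiplicityFreeDecomposition W) {x : E} {i : ι}
    (hx : x ∉ ⨆ j ≠ i, (W j).toSubmodule) :
    (W i).toSubmodule ≤ Submodule.span K (Set.range fun g ↦ σ g x) := by
  let U : Subrepresentation σ :=
    { toSubmodule := Submodule.span K (Set.range fun g ↦ σ g x)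
      apply_mem_toSubmodule := fun g ↦ by
        refine Submodule.span_le (p := (Submodule.span K _).comap (σ g)) |>.mpr ?_
        rintro _ ⟨a, rfl⟩
        exact Submodule.subset_span ⟨g * a, by simp only [map_mul, Module.End.mul_apply]⟩ }
  have hxU : x ∈ U := Submodule.subset_span ⟨1, by simp only [map_one, Module.End.one_apply]⟩
  exact hW.le_of_mem_of_notMem_iSup_ne hxU hx

end Monoid

theorem exists_apply_ne_zero [Group G] {σ : Representation K G E} {τ : Representation K G F}
    {W : ι → Subrepresentation σ} {W' : κ → Subrepresentation τ}
    (hW : IsMultiplicityFreeDecomposition W) (hW' : IsMultiplicityFreeDecomposition W')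
    (B : E →ₗ[K] F →ₗ[K] P) (hB : ∀ g x y, B (σ g x) (τ g y) = B x y) {i : ι} {i' : κ}
    (hWW' : ∃ s ∈ W i, ∃ s' ∈ W' i', B s s' ≠ 0) {x : E} {y : F}
    (hx : x ∉ ⨆ j ≠ i, (W j).toSubmodule) (hy : y ∉ ⨆ j ≠ i', (W' j).toSubmodule) :
    ∃ g, B x (τ g y) ≠ 0 := by
  by_contra! hzero
  have horbit (a b : G) : B (σ a x) (τ b y) = 0 := by
    calc B (σ a x) (τ b y) = B (σ a x) (τ a (τ (a⁻¹ * b) y)) := by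
          rw [← Module.End.mul_apply, ← map_mul, mul_inv_cancel_left]
      _ = 0 := by rw [hB, hzero]
  obtain ⟨s, hs, s', hs', hne⟩ := hWW'
  refine hne ((Submodule.mem_bot K).mp ?_)
  refine LinearMap.BilinMap.apply_apply_mem_of_mem_span ⊥ _ _ B ?_ s s'
    (hW.le_span_orbit hx hs) (hW'.le_span_orbit hy hs')
  rintro _ ⟨a, rfl⟩ _ ⟨b, rfl⟩
  exact (Submodule.mem_bot K).mpr (horbit a b)

end IsMultiplicityFreeDecomposition

end Representation

section Conjugation

/-- The representation of `G` on an algebra `A` obtained by conjugating with the units `ρ g`. -/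
def conjRepresentation (K : Type*) {G A : Type*} [CommSemiring K] [Monoid G] [Semiring A]
    [Algebra K A] (ρ : G →* Aˣ) : Representation K G A :=
  (Representation.ofDistribMulAction K (ConjAct Aˣ) A).comp
    (ConjAct.toConjAct.toMonoidHom.comp ρ)

theorem conjRepresentation_apply {K G A : Type*} [CommSemiring K] [Monoid G] [Semiring A]
    [Algebra K A] (ρ : G →* Aˣ) (g : G) (a : A) :
    conjRepresentation K ρ g a = (ρ g : A) * a * ((ρ g)⁻¹ : Aˣ) :=
  rfl

variable {K G V : Type*} [CommRing K] [AddCommGroup V] [Module K V]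

theorem trace_conjRepresentation_mul [Monoid G] (ρ : G →* (Module.End K V)ˣ) (g : G)
    (S T : Module.End K V) :
    LinearMap.trace K V (conjRepresentation K ρ g S * conjRepresentation K ρ g T) =
      LinearMap.trace K V (S * T) := by
  have hmul : conjRepresentation K ρ g S * conjRepresentation K ρ g T =
      (ρ g : Module.End K V) * (S * T) * ((ρ g)⁻¹ : (Module.End K V)ˣ) := by
    simp only [conjRepresentation_apply, mul_assoc, Units.inv_mul_cancel_left]
  rw [hmul, LinearMap.trace_conj]

theorem trace_mul_conjRepresentation_smulRight [Module.Free K V] [Module.Finite K V] [Monoid G]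
    (ρ : G →* (Module.End K V)ˣ) (g : G) (T : Module.End K V) (vstar : V →ₗ[K] K) (v : V) :
    LinearMap.trace K V (T * conjRepresentation K ρ g (vstar.smulRight v)) =
      vstar ((((ρ g)⁻¹ : (Module.End K V)ˣ) : Module.End K V)
        (T ((ρ g : Module.End K V) v))) := by
  have hrank : T * conjRepresentation K ρ g (vstar.smulRight v) =
      (vstar ∘ₗ (((ρ g)⁻¹ : (Module.End K V)ˣ) : Module.End K V)).smulRight
        (T ((ρ g : Module.End K V) v)) := by
    ext u
    simp [conjRepresentation_apply]
  rw [hrank, LinearMap.trace_smulRight, LinearMap.comp_apply]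

theorem pairing_nonvanishing_general [Module.Free K V] [Module.Finite K V] [Group G]
    (ρ : G →* (Module.End K V)ˣ) {ι : Type*} {W : ι → Subrepresentation (conjRepresentation K ρ)}
    (hW : IsMultiplicityFreeDecomposition W) {i i' : ι}
    (hdual : ∃ S ∈ W i, ∃ S' ∈ W i', LinearMap.trace K V (S * S') ≠ 0)
    {T : Module.End K V} (hT : T ∉ ⨆ j ≠ i, (W j).toSubmodule) {v : V} {vstar : V →ₗ[K] K}
    (hv : vstar.smulRight v ∉ ⨆ j ≠ i', (W j).toSubmodule) :
    ∃ h : G, vstar ((((ρ h)⁻¹ : (Module.End K V)ˣ) : Module.End K V)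
      (T ((ρ h : Module.End K V) v))) ≠ 0 := by
  obtain ⟨h, hne⟩ := hW.exists_apply_ne_zero hW
    ((LinearMap.mul K (Module.End K V)).compr₂ (LinearMap.trace K V))
    (trace_conjRepresentation_mul ρ) hdual hT hv
  exact ⟨h, trace_mul_conjRepresentation_smulRight ρ h T vstar v ▸ hne⟩

end Conjugation

/-- If `End V` is a multiplicity-free direct sum of irreducible `G`-subrepresentations
(under conjugation), `T` has nonzero component in a summand `W`, and `v* ⊗ v` has nonzero
component in the summand dual to `W` under the trace pairing, then
`(ρ(h)·v*)(T ρ(h) v) ≠ 0` for some `h ∈ G`. -/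
theorem pairing_nonvanishing {G : Type*} [Group G]
    {V : Type*} [AddCommGroup V] [Module ℂ V] [FiniteDimensional ℂ V]
    (ρ : G →* (Module.End ℂ V)ˣ)
    {ι : Type*} [Finite ι] (W : ι → Submodule ℂ (Module.End ℂ V))
    -- `End V` is the internal direct sum of the `W i`
    (hindep : iSupIndep W) (hsup : ⨆ i, W i = ⊤)
    -- each `W i` is `G`-invariant for the conjugation action
    (hinv : ∀ (i : ι) (g : G), ∀ T ∈ W i,
      ((ρ g : Module.End ℂ V) * T * ((ρ g)⁻¹ : (Module.End ℂ V)ˣ)) ∈ W i)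
    -- each `W i` is irreducible
    (hirr : ∀ i : ι, W i ≠ ⊥ ∧
      ∀ U ≤ W i, (∀ g : G, ∀ T ∈ U,
          ((ρ g : Module.End ℂ V) * T * ((ρ g)⁻¹ : (Module.End ℂ V)ˣ)) ∈ U) →
        U = ⊥ ∨ U = W i)
    -- the `W i` are pairwise non-isomorphic as `G`-representations
    (hnoniso : ∀ i j : ι, i ≠ j →
      ¬ ∃ f : Module.End ℂ V →ₗ[ℂ] Module.End ℂ V,
        (∀ (g : G) (T : Module.End ℂ V),
          f ((ρ g : Module.End ℂ V) * T * ((ρ g)⁻¹ : (Module.End ℂ V)ˣ)) =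
            (ρ g : Module.End ℂ V) * f T * ((ρ g)⁻¹ : (Module.End ℂ V)ˣ)) ∧
        Submodule.map f (W i) = W j ∧ (∀ T ∈ W i, f T = 0 → T = 0))
    (v : V) (vstar : V →ₗ[ℂ] ℂ) (T : Module.End ℂ V)
    -- `T` has nonzero component in `W i`, and `v* ⊗ v` has nonzero component in the
    -- summand `W i'` dual to `W i` under the trace pairing
    (hcomp : ∃ i i' : ι,
      (∃ S ∈ W i, ∃ S' ∈ W i', LinearMap.trace ℂ V (S * S') ≠ 0) ∧
      T ∉ (⨆ j ≠ i, W j) ∧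
      (vstar.smulRight v : Module.End ℂ V) ∉ (⨆ j ≠ i', W j)) :
    ∃ h : G, vstar ((((ρ h)⁻¹ : (Module.End ℂ V)ˣ) : Module.End ℂ V) (T ((ρ h : Module.End ℂ V) v))) ≠ 0 := by
  obtain ⟨i, i', hdual, hT, hv⟩ := hcomp
  exact pairing_nonvanishing_general ρ (.of_submodule hsup hinv hirr hnoniso) hdual hT hv
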